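/- arXiv:math/0606143 — 3 statements merged into one kernel-verified Lean document; each statement's English description precedes it below -/
import Mathlib

section
/- Let (G,L) be a graph/list pair with nodes enumerated v_1,…,v_n, and let c* be a proper list coloring of (G,L) with c*(v_k) = i_k. For 0 ≤ k ≤ n−1 define the pair (G_k, L_k) by: G_0 = G, L_0 = L; G_k is the subgraph induced on {v_{k+1},…,v_n}; and L_k(v_l) = L(v_l) ∖ { i_r : r ≤ k and (v_l, v_r) is an edge of G } for each l > k. Then Z(G_k, L_k) > 0 for every k, the probabilities P_{G_k,L_k}(c(v_{k+1}) = i_{k+1}) are positive, and Z(G,L) = ∏_{k=0}^{n−1} P_{G_k,L_k}(c(v_{k+1}) = i_{k+1})^{−1}. -/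
open scoped Classical

/-- The set of proper list colorings of the graph/list pair `(G, L)`. -/
def properColorings {V : Type} (G : SimpleGraph V) (L : V → Finset ℕ) : Set (V → ℕ) :=
  {c | (∀ v, c v ∈ L v) ∧ ∀ u w, G.Adj u w → c u ≠ c w}

/-- `Z(G,L)`: the number of proper list colorings. -/
noncomputable def numColorings {V : Type} (G : SimpleGraph V) (L : V → Finset ℕ) : ℕ :=
  (properColorings G L).ncard

/-- `P_{G,L}(E)`: probability of the event `E` under the uniform distribution on
proper list colorings. -/
noncomputable def colorProb {V : Type} (G : SimpleGraph V) (L : V → Finset ℕ)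
    (E : Set (V → ℕ)) : ℝ :=
  ((properColorings G L ∩ E).ncard : ℝ) / (numColorings G L : ℝ)

/-- Vertex set of the graph `G_k`: the nodes `v_{k+1}, …, v_n` (`0`-indexed: indices `≥ k`). -/
abbrev Svert (n k : ℕ) : Type := {l : Fin n // k ≤ (l : ℕ)}

/-- The graph `G_k`, induced on the nodes `v_{k+1}, …, v_n`. -/
def Gk {n : ℕ} (G : SimpleGraph (Fin n)) (k : ℕ) : SimpleGraph (Svert n k) :=
  SimpleGraph.comap Subtype.val G

/-- The list vector `L_k`: from the list of each remaining node delete the colors `c*(v_r)`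
of those already-removed nodes `v_r` (`r ≤ k`, i.e. `0`-indexed `r < k`) adjacent to it. -/
noncomputable def Lk {n : ℕ} (G : SimpleGraph (Fin n)) (L : Fin n → Finset ℕ)
    (cstar : Fin n → ℕ) (k : ℕ) : Svert n k → Finset ℕ :=
  fun u => L u.1 \
    (Finset.univ.filter (fun r : Fin n => (r : ℕ) < k ∧ G.Adj u.1 r)).image cstar

/-- The marginal `P_{G_k, L_k}(c(v_{k+1}) = i_{k+1})` (with `k` `0`-indexed). -/
noncomputable def margP {n : ℕ} (G : SimpleGraph (Fin n)) (L : Fin n → Finset ℕ)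
    (cstar : Fin n → ℕ) (k : Fin n) : ℝ :=
  colorProb (Gk G (k : ℕ)) (Lk G L cstar (k : ℕ))
    {c | c ⟨k, le_refl _⟩ = cstar k}

/-- Proper colorings of `(G, L)` agreeing with `cstar` on the first `k` nodes. -/
def agreeSet {n : ℕ} (G : SimpleGraph (Fin n)) (L : Fin n → Finset ℕ)
    (cstar : Fin n → ℕ) (k : ℕ) : Set (Fin n → ℕ) :=
  {d | d ∈ properColorings G L ∧ ∀ r : Fin n, (r : ℕ) < k → d r = cstar r}

theorem properColorings_finite {n : ℕ} (G : SimpleGraph (Fin n)) (L : Fin n → Finset ℕ) :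
    (properColorings G L).Finite := by
  refine (Set.Finite.pi' (fun v => (L v).finite_toSet)).subset ?_
  intro c hc v
  exact hc.1 v

theorem agreeSet_pos {n : ℕ} (G : SimpleGraph (Fin n)) (L : Fin n → Finset ℕ)
    (cstar : Fin n → ℕ) (hc : cstar ∈ properColorings G L) (k : ℕ) :
    0 < (agreeSet G L cstar k).ncard := by
  rw [Set.ncard_pos ((properColorings_finite G L).subset fun d hd => hd.1)]
  exact ⟨cstar, hc, fun _ _ => rfl⟩

theorem restrict_image {n : ℕ} (G : SimpleGraph (Fin n)) (L : Fin n → Finset ℕ)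
    (cstar : Fin n → ℕ) (hc : cstar ∈ properColorings G L) (k : ℕ) (E : Set (Svert n k → ℕ)) :
    (properColorings (Gk G k) (Lk G L cstar k) ∩ E).ncard =
      {d | d ∈ agreeSet G L cstar k ∧ (fun u : Svert n k => d u.1) ∈ E}.ncard := by
  have hinj : Set.InjOn (fun (d : Fin n → ℕ) (u : Svert n k) => d u.1)
      {d | d ∈ agreeSet G L cstar k ∧ (fun u : Svert n k => d u.1) ∈ E} := by
    rintro d ⟨⟨_, h1⟩, _⟩ d' ⟨⟨_, h2⟩, _⟩ h
    funext r
    by_cases hr : (r : ℕ) < k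
    · rw [h1 r hr, h2 r hr]
    · exact congrFun h ⟨r, not_lt.mp hr⟩
  rw [← Set.ncard_image_of_injOn hinj]
  congr 1
  ext c
  constructor
  · rintro ⟨⟨h1, h2⟩, hE⟩
    have hres : (fun u : Svert n k =>
        (fun r : Fin n => if h : k ≤ (r : ℕ) then c ⟨r, h⟩ else cstar r) u.1) = c := by
      funext u
      simp [u.2]
    have key : ∀ (u r : Fin n) (hu : k ≤ (u : ℕ)), (r : ℕ) < k → G.Adj u r →
        c ⟨u, hu⟩ ≠ cstar r := by
      intro u r hu hr hadj heq
      have := (Finset.mem_sdiff.mp (h1 ⟨u, hu⟩)).2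
      exact this (Finset.mem_image.mpr ⟨r, by simp [hr, hadj], heq.symm⟩)
    refine ⟨fun r => if h : k ≤ (r : ℕ) then c ⟨r, h⟩ else cstar r,
      ⟨⟨⟨?_, ?_⟩, ?_⟩, ?_⟩, hres⟩
    · intro v
      by_cases h : k ≤ (v : ℕ)
      · simpa [h] using (Finset.mem_sdiff.mp (h1 ⟨v, h⟩)).1
      · simpa [h] using hc.1 v
    · intro u w huw
      by_cases hu : k ≤ (u : ℕ) <;> by_cases hw : k ≤ (w : ℕ) <;> simp only [hu, hw, dite_true, dite_false]
      · exact h2 ⟨u, hu⟩ ⟨w, hw⟩ huw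
      · exact key u w hu (not_le.mp hw) huw
      · exact (key w u hw (not_le.mp hu) huw.symm).symm
      · exact hc.2 u w huw
    · intro r hr
      simp [not_le.mpr hr]
    · rw [hres]; exact hE
  · rintro ⟨d, ⟨⟨⟨h1, h2⟩, h3⟩, hE⟩, rfl⟩
    refine ⟨⟨?_, ?_⟩, hE⟩
    · intro u
      refine Finset.mem_sdiff.mpr ⟨h1 u.1, ?_⟩
      intro hmem
      obtain ⟨r, hr, heq⟩ := Finset.mem_image.mp hmem
      have hr' := (Finset.mem_filter.mp hr).2
      exact h2 u.1 r hr'.2 (by rw [h3 r hr'.1, heq])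
    · intro u w huw
      exact h2 u.1 w.1 huw

theorem num_eq {n : ℕ} (G : SimpleGraph (Fin n)) (L : Fin n → Finset ℕ)
    (cstar : Fin n → ℕ) (hc : cstar ∈ properColorings G L) (k : ℕ) :
    numColorings (Gk G k) (Lk G L cstar k) = (agreeSet G L cstar k).ncard := by
  have := restrict_image G L cstar hc k Set.univ
  simpa [numColorings] using this

theorem margP_eq {n : ℕ} (G : SimpleGraph (Fin n)) (L : Fin n → Finset ℕ)
    (cstar : Fin n → ℕ) (hc : cstar ∈ properColorings G L) (k : Fin n) :
    margP G L cstar k =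
      ((agreeSet G L cstar (k + 1)).ncard : ℝ) / ((agreeSet G L cstar k).ncard : ℝ) := by
  unfold margP colorProb
  rw [num_eq G L cstar hc, restrict_image G L cstar hc]
  congr 3
  ext d
  constructor
  · rintro ⟨⟨h1, h2⟩, h3⟩
    refine ⟨h1, fun r hr => ?_⟩
    rcases Nat.lt_succ_iff_lt_or_eq.mp hr with h | h
    · exact h2 r h
    · rw [Fin.ext h]; exact h3
  · rintro ⟨h1, h2⟩
    exact ⟨⟨h1, fun r hr => h2 r (by omega)⟩, h2 k (by omega)⟩

/-- The cavity identity: given a proper list coloring `c*`, all the reduced pairs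
`(G_k, L_k)` have colorings, the marginals `P_{G_k,L_k}(c(v_{k+1}) = i_{k+1})` are
positive, and `Z(G,L) = ∏_k P_{G_k,L_k}(c(v_{k+1}) = i_{k+1})⁻¹`. -/
theorem stmt2 (n : ℕ) (G : SimpleGraph (Fin n)) (L : Fin n → Finset ℕ)
    (cstar : Fin n → ℕ) (hc : cstar ∈ properColorings G L) :
    (∀ k : ℕ, k < n → 0 < numColorings (Gk G k) (Lk G L cstar k)) ∧
    (∀ k : Fin n, 0 < margP G L cstar k) ∧
    (numColorings G L : ℝ) = ∏ k : Fin n, (margP G L cstar k)⁻¹ := by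
  have hpos : ∀ k, (0 : ℝ) < ((agreeSet G L cstar k).ncard : ℝ) := fun k => by
    exact_mod_cast agreeSet_pos G L cstar hc k
  refine ⟨fun k _ => ?_, fun k => ?_, ?_⟩
  · rw [num_eq G L cstar hc]
    exact agreeSet_pos G L cstar hc k
  · rw [margP_eq G L cstar hc]
    exact div_pos (hpos _) (hpos _)
  · have h0 : agreeSet G L cstar 0 = properColorings G L := by
      ext d; simp [agreeSet]
    have hn : agreeSet G L cstar n = {cstar} := by
      ext d
      constructor
      · rintro ⟨_, h⟩
        exact funext fun r => h r r.2
      · rintro rfl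
        exact ⟨hc, fun _ _ => rfl⟩
    have htel : ∀ m : ℕ, ∏ k ∈ Finset.range m, (((agreeSet G L cstar (k + 1)).ncard : ℝ) /
        ((agreeSet G L cstar k).ncard : ℝ))⁻¹ =
        ((agreeSet G L cstar 0).ncard : ℝ) / ((agreeSet G L cstar m).ncard : ℝ) := by
      intro m
      induction m with
      | zero => simp [(hpos 0).ne']
      | succ m ih =>
        rw [Finset.prod_range_succ, ih]
        have := (hpos m).ne'
        have := (hpos (m + 1)).ne'
        field_simp
    simp only [margP_eq G L cstar hc]
    rw [Fin.prod_univ_eq_prod_range (fun k => (((agreeSet G L cstar (k + 1)).ncard : ℝ) /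
        ((agreeSet G L cstar k).ncard : ℝ))⁻¹) n, htel n, h0, hn]
    simp [numColorings]
end

section
/- Let α ≥ 1 and β ∈ ℝ, and let (G,L) be a graph/list pair satisfying |L(u)| ≥ α·Δ_G(u) + β for every node u, where Δ_G(u) is the degree of u in G. Let v be a node of G with neighbors v_1,…,v_m listed in a fixed order. Then for every 1 ≤ k ≤ m and every color i, the reduced pair (G_v, L_{k,i}) satisfies |L_{k,i}(u)| ≥ α·Δ_{G_v}(u) + β for every node u of G_v, where Δ_{G_v}(u) is the degree of u in G_v. -/
open scoped Classical

/-- The degree of a node `v` in `G`. -/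
noncomputable def deg {V : Type} (G : SimpleGraph V) (v : V) : ℕ :=
  (G.neighborSet v).ncard

/-- The graph `G_v`: `G` with the node `v` deleted. -/
def Gdel {V : Type} (G : SimpleGraph V) (v : V) : SimpleGraph {u : V // u ≠ v} :=
  SimpleGraph.comap Subtype.val G

/-- The list vector `L_{k,i}`: the color `i` is deleted from the lists of the neighbors
`v_r` of `v` with `1 ≤ r < k` (here `w` lists the neighbors in a fixed order, `0`-indexed),
all other lists are unchanged. -/
noncomputable def Lki {V : Type} (L : V → Finset ℕ) (v : V) {m : ℕ} (w : Fin m → V)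
    (k : ℕ) (i : ℕ) : {u : V // u ≠ v} → Finset ℕ :=
  fun u => if ∃ r : Fin m, (r : ℕ) + 1 < k ∧ w r = u.1 then L u.1 \ {i} else L u.1

/-- If `(G, L)` satisfies `|L(u)| ≥ α·Δ_G(u) + β` (with `α ≥ 1`) then every reduced pair
`(G_v, L_{k,i})`, `1 ≤ k ≤ m`, satisfies `|L_{k,i}(u)| ≥ α·Δ_{G_v}(u) + β`. -/
theorem stmt3 {V : Type} [Fintype V] (α β : ℝ) (hα : 1 ≤ α)
    (G : SimpleGraph V) (L : V → Finset ℕ)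
    (hL : ∀ u, α * (deg G u : ℝ) + β ≤ ((L u).card : ℝ))
    (v : V) (m : ℕ) (w : Fin m → V) (hinj : Function.Injective w)
    (hnbr : ∀ u, G.Adj v u ↔ ∃ r, w r = u)
    (k : ℕ) (hk1 : 1 ≤ k) (hkm : k ≤ m) (i : ℕ) :
    ∀ u : {x : V // x ≠ v},
      α * (deg (Gdel G v) u : ℝ) + β ≤ ((Lki L v w k i u).card : ℝ) := by
  intro u
  have himg : (Subtype.val '' ((Gdel G v).neighborSet u)) = G.neighborSet u.1 \ {v} := by
    ext x
    simp only [Set.mem_image, SimpleGraph.mem_neighborSet, Set.mem_diff, Set.mem_singleton_iff]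
    constructor
    · rintro ⟨y, hy, rfl⟩
      exact ⟨hy, y.2⟩
    · rintro ⟨h1, h2⟩
      exact ⟨⟨x, h2⟩, h1, rfl⟩
  have hdeg : deg (Gdel G v) u = (G.neighborSet u.1 \ {v}).ncard := by
    rw [← himg, Set.ncard_image_of_injective _ Subtype.val_injective]
    rfl
  have h := hL u.1
  unfold Lki
  split_ifs with hr
  · obtain ⟨r, -, hr⟩ := hr
    have hadj : v ∈ G.neighborSet u.1 := ((hnbr u.1).2 ⟨r, hr⟩).symm
    have h1 : deg (Gdel G v) u + 1 = deg G u.1 := by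
      rw [hdeg]
      exact Set.ncard_diff_singleton_add_one hadj (Set.toFinite _)
    have h2 : (L u.1).card ≤ (L u.1 \ {i}).card + 1 := by
      have := Finset.card_le_card_sdiff_add_card (s := L u.1) (t := {i})
      simpa using this
    have h2' : ((L u.1).card : ℝ) ≤ ((L u.1 \ {i}).card : ℝ) + 1 := by exact_mod_cast h2
    rw [← h1] at h
    push_cast at h
    linarith
  · have h1 : deg (Gdel G v) u ≤ deg G u.1 := by
      rw [hdeg]
      exact Set.ncard_le_ncard Set.diff_subset (Set.toFinite _)
    have h1' : (deg (Gdel G v) u : ℝ) ≤ (deg G u.1 : ℝ) := by exact_mod_cast h1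
    have h3 := mul_le_mul_of_nonneg_left h1' (by linarith : (0:ℝ) ≤ α)
    linarith
end

section
/- Let X be a finite nonempty set, m ≥ 1 an integer, x_0 ∈ X, φ : X → ℝ_{>0}, and f_k : X × X → ℝ_{>0} for 1 ≤ k ≤ m. Let f_min and f_max be the minimum and maximum of f_k(x,y) over all k, x, y, and set c_f = f_max/f_min. Let I = ⋃_{k=1}^{m} X^k be the set of all sequences (x_1,…,x_k) of elements of X of length between 1 and m, and for w : I → ℝ define G(w) = log[ φ(x_0) ∑_{(x_1,…,x_m)∈X^m} ∏_{k=1}^{m} f_k(x_0, x_k)·exp(w_{(x_1,…,x_k)}) ] − log[ ∑_{x∈X} φ(x) ∑_{(x_1,…,x_m)∈X^m} ∏_{k=1}^{m} f_k(x, x_k)·exp(w_{(x_1,…,x_k)}) ]. Then for all w, w' : I → ℝ: |G(w) − G(w')| ≤ (c_f^m − c_f^{−m}) · m · |X|^m · max_{ι∈I} |w_ι − w'_ι|. -/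
/-- The index set `I = ⋃_{k=1}^m X^k`: sequences `(x_1, …, x_k)` of elements of `𝒳`
of length between `1` and `m` (a sequence of length `k+1` for each `k : Fin m`). -/
abbrev SeqIdx (m : ℕ) (𝒳 : Type) : Type := Σ k : Fin m, Fin ((k : ℕ) + 1) → 𝒳

/-- The function `G(w)`: the logarithm of the MRF recursion map,
`G(w) = log[ φ(x_0) ∑_{(x_1,…,x_m)} ∏_k f_k(x_0,x_k)·e^{w_{(x_1,…,x_k)}} ]
      − log[ ∑_x φ(x) ∑_{(x_1,…,x_m)} ∏_k f_k(x,x_k)·e^{w_{(x_1,…,x_k)}} ]`. -/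
noncomputable def Gfun {𝒳 : Type} [Fintype 𝒳] (m : ℕ) (x0 : 𝒳) (φ : 𝒳 → ℝ)
    (f : Fin m → 𝒳 → 𝒳 → ℝ) (w : SeqIdx m 𝒳 → ℝ) : ℝ :=
  Real.log (φ x0 * ∑ xv : Fin m → 𝒳, ∏ k : Fin m,
      (f k x0 (xv k) * Real.exp (w ⟨k, fun r => xv (Fin.castLE k.isLt r)⟩)))
    - Real.log (∑ x : 𝒳, φ x * ∑ xv : Fin m → 𝒳, ∏ k : Fin m,
      (f k x (xv k) * Real.exp (w ⟨k, fun r => xv (Fin.castLE k.isLt r)⟩)))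

lemma weight_bounds {ι : Type*} [Fintype ι] [Nonempty ι] (A e : ι → ℝ) (a b : ℝ)
    (ha : 0 < a) (hA : ∀ i, a ≤ A i ∧ A i ≤ b) (he : ∀ i, 0 < e i) (i : ι) :
    a / b * (e i / ∑ j, e j) ≤ A i * e i / ∑ j, A j * e j ∧
    A i * e i / ∑ j, A j * e j ≤ b / a * (e i / ∑ j, e j) := by
  have hb : 0 < b := lt_of_lt_of_le ha ((hA i).1.trans (hA i).2)
  have hS : 0 < ∑ j, e j := Finset.sum_pos (fun j _ => he j) Finset.univ_nonempty
  have h1 : a * ∑ j, e j ≤ ∑ j, A j * e j := by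
    rw [Finset.mul_sum]
    exact Finset.sum_le_sum fun j _ => mul_le_mul_of_nonneg_right (hA j).1 (he j).le
  have h2 : ∑ j, A j * e j ≤ b * ∑ j, e j := by
    rw [Finset.mul_sum]
    exact Finset.sum_le_sum fun j _ => mul_le_mul_of_nonneg_right (hA j).2 (he j).le
  have hT : 0 < ∑ j, A j * e j := lt_of_lt_of_le (by positivity) h1
  have hei := he i
  constructor
  · rw [div_mul_div_comm]
    exact div_le_div₀ (mul_nonneg (ha.le.trans (hA i).1) hei.le)
      (mul_le_mul_of_nonneg_right (hA i).1 hei.le) hT h2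
  · rw [div_mul_div_comm]
    exact div_le_div₀ (by positivity)
      (mul_le_mul_of_nonneg_right (hA i).2 hei.le) (by positivity) h1

lemma deriv_bound {ι : Type*} [Fintype ι] [Nonempty ι] (A B e d : ι → ℝ) (a b P M : ℝ)
    (ha : 0 < a) (hP : 0 < P) (hA : ∀ i, a ≤ A i ∧ A i ≤ b)
    (hB : ∀ i, P * a ≤ B i ∧ B i ≤ P * b) (he : ∀ i, 0 < e i) (hd : ∀ i, |d i| ≤ M) :
    |(∑ i, A i * (e i * d i)) / (∑ i, A i * e i) - (∑ i, B i * (e i * d i)) / (∑ i, B i * e i)|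
      ≤ (b / a - a / b) * M := by
  have hS : 0 < ∑ j, e j := Finset.sum_pos (fun j _ => he j) Finset.univ_nonempty
  have key : (∑ i, A i * (e i * d i)) / (∑ i, A i * e i)
      - (∑ i, B i * (e i * d i)) / (∑ i, B i * e i)
      = ∑ i, (A i * e i / (∑ j, A j * e j) - B i * e i / (∑ j, B j * e j)) * d i := by
    rw [Finset.sum_div, Finset.sum_div, ← Finset.sum_sub_distrib]
    exact Finset.sum_congr rfl fun i _ => by ring
  rw [key]
  have hR : (b / a - a / b) * M = ∑ i, ((b / a - a / b) * (e i / ∑ j, e j)) * M := by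
    rw [← Finset.sum_mul, ← Finset.mul_sum, ← Finset.sum_div, div_self hS.ne', mul_one]
  rw [hR]
  refine (Finset.abs_sum_le_sum_abs _ _).trans (Finset.sum_le_sum fun i _ => ?_)
  rw [abs_mul]
  have h1 := weight_bounds A e a b ha hA he i
  have h2 := weight_bounds B e (P * a) (P * b) (by positivity) hB he i
  rw [mul_div_mul_left _ _ hP.ne', mul_div_mul_left _ _ hP.ne'] at h2
  have h3 : |A i * e i / (∑ j, A j * e j) - B i * e i / (∑ j, B j * e j)|
      ≤ (b / a - a / b) * (e i / ∑ j, e j) := by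
    rw [abs_le]; constructor <;> linarith [h1.1, h1.2, h2.1, h2.2]
  exact mul_le_mul h3 (hd i) (abs_nonneg _) ((abs_nonneg _).trans h3)

lemma log_hasDeriv {ι : Type*} [Fintype ι] [Nonempty ι] (A s d : ι → ℝ) (hA : ∀ i, 0 < A i)
    (t : ℝ) : HasDerivAt (fun t => Real.log (∑ i, A i * Real.exp (s i + t * d i)))
      ((∑ i, A i * (Real.exp (s i + t * d i) * d i)) / (∑ i, A i * Real.exp (s i + t * d i))) t := by
  apply HasDerivAt.log
  · apply HasDerivAt.fun_sum
    intro i _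
    apply HasDerivAt.const_mul
    apply HasDerivAt.exp
    simpa using ((hasDerivAt_id t).mul_const (d i)).const_add (s i)
  · exact (Finset.sum_pos (fun i _ => mul_pos (hA i) (Real.exp_pos _)) Finset.univ_nonempty).ne'

lemma log_ratio_bound {ι : Type*} [Fintype ι] [Nonempty ι] (A B s s' : ι → ℝ) (a b P M : ℝ)
    (ha : 0 < a) (hP : 0 < P) (hA : ∀ i, a ≤ A i ∧ A i ≤ b)
    (hB : ∀ i, P * a ≤ B i ∧ B i ≤ P * b) (hd : ∀ i, |s i - s' i| ≤ M) :
    |(Real.log (∑ i, A i * Real.exp (s i)) - Real.log (∑ i, B i * Real.exp (s i)))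
      - (Real.log (∑ i, A i * Real.exp (s' i)) - Real.log (∑ i, B i * Real.exp (s' i)))|
      ≤ (b / a - a / b) * M := by
  have hA0 : ∀ i, 0 < A i := fun i => lt_of_lt_of_le ha (hA i).1
  have hB0 : ∀ i, 0 < B i := fun i => lt_of_lt_of_le (by positivity) (hB i).1
  have h := Convex.norm_image_sub_le_of_norm_hasDerivWithin_le (s := Set.univ) (x := (0:ℝ))
    (y := 1) (C := (b / a - a / b) * M)
    (fun t _ => ((log_hasDeriv A s' (fun i => s i - s' i) hA0 t).sub
      (log_hasDeriv B s' (fun i => s i - s' i) hB0 t)).hasDerivWithinAt)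
    (fun t _ => deriv_bound A B _ _ a b P M ha hP hA hB (fun i => Real.exp_pos _) hd)
    convex_univ (Set.mem_univ _) (Set.mem_univ _)
  simpa using h

/-- The Lipschitz estimate for the logarithmic MRF recursion map: with positive
`φ` and `f_k(x,y) ∈ [f_min, f_max]`, `c_f = f_max/f_min`,
`|G(w) − G(w')| ≤ (c_f^m − c_f^{−m}) · m · |𝒳|^m · max_ι |w_ι − w'_ι|`. -/
theorem stmt19 {𝒳 : Type} [Fintype 𝒳] [Nonempty 𝒳] (m : ℕ) (hm : 1 ≤ m)
    (x0 : 𝒳) (φ : 𝒳 → ℝ) (hφ : ∀ x, 0 < φ x)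
    (f : Fin m → 𝒳 → 𝒳 → ℝ) (fmin fmax : ℝ) (hfmin : 0 < fmin)
    (hf : ∀ k x y, f k x y ∈ Set.Icc fmin fmax)
    (w w' : SeqIdx m 𝒳 → ℝ) :
    |Gfun m x0 φ f w - Gfun m x0 φ f w'|
      ≤ ((fmax / fmin) ^ m - (fmin / fmax) ^ m) * (m : ℝ) * (Fintype.card 𝒳 : ℝ) ^ m *
          ⨆ ι : SeqIdx m 𝒳, |w ι - w' ι| := by
  classical
  have hDk : ∀ ι, |w ι - w' ι| ≤ ⨆ ι : SeqIdx m 𝒳, |w ι - w' ι| := fun ι =>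
    le_ciSup (f := fun ι => |w ι - w' ι|) (Set.finite_range _).bddAbove ι
  set D := ⨆ ι : SeqIdx m 𝒳, |w ι - w' ι| with hD
  have hD0 : 0 ≤ D := Real.iSup_nonneg fun _ => abs_nonneg _
  have hmm : fmin ≤ fmax := (hf ⟨0, hm⟩ x0 x0).1.trans (hf ⟨0, hm⟩ x0 x0).2
  have hfmax : 0 < fmax := lt_of_lt_of_le hfmin hmm
  have hprod : ∀ x (xv : Fin m → 𝒳), fmin ^ m ≤ ∏ k, f k x (xv k) ∧
      ∏ k, f k x (xv k) ≤ fmax ^ m := by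
    intro x xv
    constructor
    · simpa using Finset.prod_le_prod (s := Finset.univ) (f := fun _ : Fin m => fmin)
        (fun _ _ => hfmin.le) (fun k _ => (hf k x (xv k)).1)
    · simpa using Finset.prod_le_prod (s := Finset.univ) (g := fun _ : Fin m => fmax)
        (fun k _ => hfmin.le.trans (hf k x (xv k)).1) (fun k _ => (hf k x (xv k)).2)
  have hφ' : 0 < ∑ x, φ x := Finset.sum_pos (fun x _ => hφ x) Finset.univ_nonempty
  have hG : ∀ u : SeqIdx m 𝒳 → ℝ, Gfun m x0 φ f u = Real.log (φ x0) +
      (Real.log (∑ xv : Fin m → 𝒳, (∏ k, f k x0 (xv k)) *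
        Real.exp (∑ k : Fin m, u ⟨k, fun r => xv (Fin.castLE k.isLt r)⟩)) -
      Real.log (∑ xv : Fin m → 𝒳, (∑ x, φ x * ∏ k, f k x (xv k)) *
        Real.exp (∑ k : Fin m, u ⟨k, fun r => xv (Fin.castLE k.isLt r)⟩))) := by
    intro u
    unfold Gfun
    simp only [Finset.prod_mul_distrib, ← Real.exp_sum]
    rw [Real.log_mul (hφ x0).ne', add_sub_assoc]
    · congr 3
      simp only [Finset.mul_sum, Finset.sum_mul]
      rw [Finset.sum_comm]
      exact Finset.sum_congr rfl fun _ _ => Finset.sum_congr rfl fun _ _ => by ring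
    · exact (Finset.sum_pos (fun xv _ => mul_pos
        (lt_of_lt_of_le (by positivity) (hprod x0 xv).1) (Real.exp_pos _))
        Finset.univ_nonempty).ne'
  rw [hG w, hG w', add_sub_add_left_eq_sub]
  have main := log_ratio_bound (fun xv : Fin m → 𝒳 => ∏ k, f k x0 (xv k))
    (fun xv => ∑ x, φ x * ∏ k, f k x (xv k))
    (fun xv => ∑ k : Fin m, w ⟨k, fun r => xv (Fin.castLE k.isLt r)⟩)
    (fun xv => ∑ k : Fin m, w' ⟨k, fun r => xv (Fin.castLE k.isLt r)⟩)
    (fmin ^ m) (fmax ^ m) (∑ x, φ x) (m * D) (by positivity) hφ' (hprod x0)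
    (fun xv => by
      constructor
      · rw [Finset.sum_mul]
        exact Finset.sum_le_sum fun x _ => mul_le_mul_of_nonneg_left (hprod x xv).1 (hφ x).le
      · rw [Finset.sum_mul]
        exact Finset.sum_le_sum fun x _ => mul_le_mul_of_nonneg_left (hprod x xv).2 (hφ x).le)
    (fun xv => by
      rw [← Finset.sum_sub_distrib]
      refine (Finset.abs_sum_le_sum_abs _ _).trans ?_
      refine (Finset.sum_le_sum fun k _ => hDk _).trans ?_
      simp)
  refine main.trans ?_
  rw [← div_pow, ← div_pow]
  have hc : (fmin / fmax) ^ m ≤ (fmax / fmin) ^ m := by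
    apply pow_le_pow_left₀ (by positivity)
    exact ((div_le_one hfmax).2 hmm).trans ((one_le_div hfmin).2 hmm)
  have hX : (1 : ℝ) ≤ (Fintype.card 𝒳 : ℝ) ^ m :=
    one_le_pow₀ (by exact_mod_cast Fintype.card_pos)
  have h0 : 0 ≤ ((fmax / fmin) ^ m - (fmin / fmax) ^ m) * (m * D) :=
    mul_nonneg (sub_nonneg.2 hc) (by positivity)
  calc _ ≤ ((fmax / fmin) ^ m - (fmin / fmax) ^ m) * (m * D) * (Fintype.card 𝒳 : ℝ) ^ m :=
        le_mul_of_one_le_right h0 hX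
    _ = _ := by ring
end
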